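/- For every d, m, r ∈ ℕ and every ε > 0 there exists n ∈ ℕ such that for every coloring c of the set CQ(ℓ₁^n(ℂ), ℓ₁^d(ℂ)) of contractive quotient mappings with r colors, there exist a contractive quotient mapping γ : ℓ₁^n(ℂ) → ℓ₁^m(ℂ) and a color j such that for every contractive quotient mapping ρ : ℓ₁^m(ℂ) → ℓ₁^d(ℂ) there is a contractive quotient mapping ρ' : ℓ₁^n(ℂ) → ℓ₁^d(ℂ) with c(ρ') = j and ‖ρ ∘ γ − ρ'‖ ≤ ε (operator norm). -/

import Mathlib

/-- `ℓ₁ⁿ(ℂ)`: the space `ℂⁿ` with the norm given by the sum of the absolute values of the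
coordinates. -/
abbrev L1C (n : ℕ) : Type := PiLp 1 (fun _ : Fin n => ℂ)

/-- A linear map is a *contractive quotient mapping* if it maps the closed unit ball onto the
closed unit ball. -/
def IsContractiveQuotient {n d : ℕ} (φ : L1C n →L[ℂ] L1C d) : Prop :=
  ⇑φ '' Metric.closedBall 0 1 = Metric.closedBall 0 1

/-!
Index the columns of a map `ℓ₁ⁿ → E` by the letters of a word, each letter standing for a point of
a finite net of the unit ball of `E`. A colouring of quotient maps becomes a colouring of words,
and the Graham–Rothschild theorem (deduced here from Hales–Jewett) provides a parameter word `γ`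
all of whose instantiations `γ[σ]` by parameter words `σ` have the same colour. Reading `γ` over a
finite list of points of `F` gives the quotient map `ℓ₁ⁿ → F`.

For `ρ : F → E` one needs a *parameter word* `σ` whose letters approximate the images under `ρ` of
that list, although in a parameter word the letters must make their first appearances in a
prescribed order. This is why the net consists of the points `(s / N) • f l`, ordered by the level
`s`: a point of level `s` is within `ε` of a point of level `s - 1`, so the letters that have
already appeared are good enough until the next one is due.
-/

/-! ### Parameter words -/

/-- `IsParamWord a n k w`: `w` is a `k`-parameter word of length `n` over the constants
`0, …, a - 1`. The parameters are the letters `a, …, a + k - 1`, they all occur, and their first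
occurrences come in increasing order. A parameter counts as a constant once it has occurred, hence
the `a + 1` in `cons_new`. -/
inductive IsParamWord : ℕ → ℕ → ℕ → List ℕ → Prop
  | nil (a : ℕ) : IsParamWord a 0 0 []
  | cons_old {a n k x : ℕ} {w : List ℕ} :
      x < a → IsParamWord a n k w → IsParamWord a (n + 1) k (x :: w)
  | cons_new {a n k : ℕ} {w : List ℕ} :
      IsParamWord (a + 1) n k w → IsParamWord a (n + 1) (k + 1) (a :: w)

namespace IsParamWord

variable {a b n n' m k k' y : ℕ} {w w' γ σ : List ℕ}

theorem length_eq (h : IsParamWord a n k w) : w.length = n := by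
  induction h with
  | nil => rfl
  | cons_old _ _ ih => simp [ih]
  | cons_new _ ih => simp [ih]

theorem lt_of_mem (h : IsParamWord a n k w) (hy : y ∈ w) : y < a + k := by
  induction h with
  | nil => simp at hy
  | cons_old hx _ ih => rcases List.mem_cons.1 hy with rfl | hy <;> grind
  | cons_new _ ih => rcases List.mem_cons.1 hy with rfl | hy <;> grind

theorem mem (h : IsParamWord a n k w) (hay : a ≤ y) (hy : y < a + k) : y ∈ w := by
  induction h with
  | nil => omega
  | cons_old _ _ ih => exact List.mem_cons_of_mem _ (ih hay hy)
  | cons_new _ ih => grind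

theorem of_forall_lt (h : ∀ y ∈ w, y < a) : IsParamWord a w.length 0 w := by
  induction w with
  | nil => exact nil a
  | cons x w ih =>
    rw [List.forall_mem_cons] at h
    exact cons_old h.1 (ih h.2)

theorem range' (a k : ℕ) : IsParamWord a k k (List.range' a k) := by
  induction k generalizing a with
  | zero => exact nil a
  | succ k ih => exact cons_new (ih (a + 1))

theorem append (h : IsParamWord a n k w) (h' : IsParamWord (a + k) n' k' w') :
    IsParamWord a (n + n') (k + k') (w ++ w') := by
  induction h with
  | nil => simpa using h'
  | @cons_old a n k x w hx _ ih =>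
    rw [Nat.add_right_comm]
    exact cons_old hx (ih h')
  | @cons_new a n k w _ ih =>
    rw [Nat.add_right_comm, Nat.add_right_comm k]
    exact cons_new (ih (by rwa [Nat.add_right_comm, Nat.add_assoc]))

theorem of_mem_of_forall_le (ha : a ∈ w) (hw : ∀ y ∈ w, y ≤ a) :
    IsParamWord a w.length 1 w := by
  obtain ⟨u, v, rfl, hau⟩ := List.eq_append_cons_of_mem ha
  rw [List.forall_mem_append, List.forall_mem_cons] at hw
  have hu : IsParamWord a u.length 0 u :=
    .of_forall_lt fun y hy => (hw.1 y hy).lt_of_ne (by rintro rfl; exact hau hy)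
  have hv : IsParamWord (a + 1) v.length 0 v :=
    .of_forall_lt fun y hy => Nat.lt_succ_of_le (hw.2.2 y hy)
  simpa [Nat.add_assoc] using hu.append hv.cons_new

theorem map {f : ℕ → ℕ} (hγ : IsParamWord a n m γ) (hσ : IsParamWord b m k σ)
    (hconst : ∀ y < a, f y < b) (hparam : ∀ i < m, f (a + i) = σ.getD i 0) :
    IsParamWord b n k (γ.map f) := by
  induction hγ generalizing b k σ with
  | nil => cases hσ; exact nil b
  | cons_old hx _ ih => exact cons_old (hconst _ hx) (ih hσ hconst hparam)
  | @cons_new a n m γ _ ih =>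
    have hfa : f a = σ.getD 0 0 := hparam 0 m.succ_pos
    have hfs : ∀ i < m, f (a + 1 + i) = σ.tail.getD i 0 := fun i hi => by
      have := hparam (i + 1) (by omega)
      rw [Nat.add_right_comm, Nat.add_assoc, this]
      cases σ <;> rfl
    cases hσ with
    | @cons_old _ _ _ x σ hx hσ =>
      have hfx : f a = x := hfa
      refine cons_old (hfx ▸ hx) (ih hσ (fun y hy => ?_) hfs)
      rcases Nat.lt_succ_iff_lt_or_eq.1 hy with hy | rfl
      exacts [hconst y hy, hfx ▸ hx]
    | @cons_new _ _ k σ hσ =>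
      have hfb : f a = b := hfa
      rw [List.map_cons, hfb]
      refine cons_new (ih hσ (fun y hy => ?_) hfs)
      rcases Nat.lt_succ_iff_lt_or_eq.1 hy with hy | rfl
      exacts [Nat.lt_succ_of_lt (hconst y hy), hfb ▸ Nat.lt_succ_self b]

end IsParamWord

/-- The instantiation `γ[σ]`: replaces the parameters `a, a + 1, …` of `γ` by the letters of `σ`.
Parameters beyond the length of `σ` get the junk value `0`. -/
def instantiate (a : ℕ) (γ σ : List ℕ) : List ℕ := γ.map ((List.range a ++ σ).getD · 0)

section instantiate

variable {a n m k x y : ℕ} {u w γ γ' σ τ : List ℕ}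

theorem getD_range_append_of_lt (hx : x < a) : (List.range a ++ σ).getD x 0 = x := by
  rw [List.getD_append _ _ _ _ (by simpa using hx)]
  simp [hx]

theorem getD_range_append_add : (List.range a ++ σ).getD (a + x) 0 = σ.getD x 0 := by
  rw [List.getD_append_right _ _ _ _ (by simp)]
  simp

theorem length_instantiate : (instantiate a γ σ).length = γ.length :=
  List.length_map _

theorem instantiate_append :
    instantiate a (γ ++ γ') σ = instantiate a γ σ ++ instantiate a γ' σ :=
  List.map_append

theorem instantiate_cons_of_lt (hx : x < a) :
    instantiate a (x :: γ) σ = x :: instantiate a γ σ :=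
  congrArg (· :: _) (getD_range_append_of_lt hx)

theorem instantiate_cons_self :
    instantiate a (a :: γ) (x :: σ) = x :: instantiate a γ (x :: σ) :=
  congrArg (· :: _) (getD_range_append_add (x := 0))

theorem instantiate_succ : instantiate (a + 1) γ σ = instantiate a γ (a :: σ) := by
  rw [instantiate, instantiate, List.range_succ, List.append_assoc, List.singleton_append]

theorem instantiate_append_right (hγ : ∀ y ∈ γ, y < a + σ.length) :
    instantiate a γ (σ ++ τ) = instantiate a γ σ := by
  refine List.map_congr_left fun y hy => ?_
  rw [← List.append_assoc, List.getD_append _ _ _ _ (by simpa using hγ y hy)]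

theorem instantiate_assoc (hγ : ∀ y ∈ γ, y < a + w.length) :
    instantiate a (instantiate a γ w) σ = instantiate a γ (instantiate a w σ) := by
  rw [instantiate, instantiate, List.map_map]
  refine List.map_congr_left fun y hy => ?_
  rw [Function.comp_apply]
  obtain hya | hay := lt_or_ge y a
  · rw [getD_range_append_of_lt hya, getD_range_append_of_lt hya, getD_range_append_of_lt hya]
  · obtain ⟨i, rfl⟩ := Nat.exists_eq_add_of_le hay
    have hi : i < w.length := by simpa using hγ _ hy
    rw [getD_range_append_add, getD_range_append_add, List.getD_eq_getElem w 0 hi]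
    exact (List.getElem_map _).symm.trans
      (List.getD_eq_getElem _ _ (length_instantiate.symm ▸ hi)).symm

theorem IsParamWord.comp (hγ : IsParamWord a n m γ) (hσ : IsParamWord a m k σ) :
    IsParamWord a n k (instantiate a γ σ) :=
  hγ.map hσ (fun y hy => by rwa [getD_range_append_of_lt hy])
    fun i _ => getD_range_append_add

theorem IsParamWord.instantiate_assoc (hγ : IsParamWord a n m γ) (hw : w.length = m) :
    instantiate a (instantiate a γ w) σ =
      instantiate a γ (instantiate a w σ) :=
  _root_.instantiate_assoc fun _ hy => hw ▸ hγ.lt_of_mem hy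

theorem IsParamWord.lt_of_mem_instantiate_singleton (hu : IsParamWord a n 1 u) (hx : x < a)
    (hy : y ∈ instantiate a u [x]) : y < a :=
  (hu.comp (IsParamWord.nil a |>.cons_old hx)).lt_of_mem hy

theorem IsParamWord.instantiate_cons_eq_singleton (hu : IsParamWord a n 1 u) :
    instantiate a u (x :: σ) = instantiate a u [x] :=
  instantiate_append_right (σ := [x]) fun _ => hu.lt_of_mem

end instantiate

/-- Renumbering that frees the letter `a` for an additional constant: a parameter word over
`0, …, a - 1` becomes one over `0, …, a`. -/
def skipLetter (a : ℕ) (w : List ℕ) : List ℕ := w.map fun y => if y < a then y else y + 1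

section skipLetter

variable {a n b k x : ℕ} {w γ δ σ : List ℕ}

theorem IsParamWord.skip (h : IsParamWord a n k w) :
    IsParamWord (a + 1) n k (skipLetter a w) := by
  refine h.map (.range' (a + 1) k) (fun y hy => ?_) fun i hi => ?_
  · rw [if_pos hy]
    omega
  · rw [if_neg (by omega), List.getD_eq_getElem _ _ (by simpa using hi), List.getElem_range']
    omega

theorem instantiate_skipLetter_cons :
    instantiate a (skipLetter a γ) (x :: σ) = instantiate a γ σ := by
  rw [instantiate, instantiate, skipLetter, List.map_map]
  refine List.map_congr_left fun y _ => ?_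
  by_cases hy : y < a
  · simp only [Function.comp_apply, if_pos hy, getD_range_append_of_lt hy]
  · obtain ⟨i, rfl⟩ := Nat.exists_eq_add_of_le (not_lt.1 hy)
    simp only [Function.comp_apply, if_neg hy, Nat.add_assoc, getD_range_append_add,
      List.getD_cons_succ]

theorem instantiate_cons_skipLetter_cons :
    instantiate a (a :: skipLetter a γ) (x :: σ) = x :: instantiate a γ σ := by
  rw [instantiate_cons_self, instantiate_skipLetter_cons]

theorem instantiate_instantiate_skipLetter (hδ : IsParamWord (a + 1) n b δ) (hγ : γ.length = b) :
    instantiate a (instantiate (a + 1) δ (skipLetter a γ)) (x :: σ) =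
      instantiate a δ (x :: instantiate a γ σ) := by
  have hlt : ∀ y ∈ δ, y < a + (a :: skipLetter a γ).length := fun y hy => by
    simpa [skipLetter, hγ, Nat.add_assoc, Nat.add_comm 1] using hδ.lt_of_mem hy
  rw [instantiate_succ, instantiate_assoc hlt, instantiate_cons_skipLetter_cons]

end skipLetter

/-- The constant part of `w`: the letters preceding the first occurrence of a parameter, where the
constants are `0, …, a - 1`. -/
def constPrefix (a : ℕ) (w : List ℕ) : List ℕ := w.takeWhile (· < a)

section constPrefix

variable {a n k x : ℕ} {w σ : List ℕ}

theorem constPrefix_cons_of_lt (hx : x < a) : constPrefix a (x :: w) = x :: constPrefix a w :=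
  List.takeWhile_cons_of_pos (by simpa using hx)

theorem constPrefix_cons_of_le (hx : a ≤ x) : constPrefix a (x :: w) = [] :=
  List.takeWhile_cons_of_neg (by simpa using hx)

theorem constPrefix_of_forall_lt (hw : ∀ y ∈ w, y < a) : constPrefix a w = w :=
  List.takeWhile_eq_self_iff.2 (by simpa using hw)

theorem constPrefix_append (hw : ∀ y ∈ w, y < a) :
    constPrefix a (w ++ σ) = w ++ constPrefix a σ :=
  List.takeWhile_append_of_pos (by simpa using hw)

theorem lt_of_mem_constPrefix (hx : x ∈ constPrefix a w) : x < a := by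
  simpa using List.mem_takeWhile_imp hx

theorem length_constPrefix_le : (constPrefix a w).length ≤ w.length :=
  (List.takeWhile_sublist _).length_le

theorem constPrefix_instantiate_cons (hw : IsParamWord a n k w) (hx : a ≤ x) :
    constPrefix a (instantiate a w (x :: σ)) = constPrefix a w := by
  induction hw with
  | nil => rfl
  | cons_old hy _ ih =>
    rw [instantiate_cons_of_lt hy, constPrefix_cons_of_lt hy, constPrefix_cons_of_lt hy, ih hx]
  | cons_new _ _ =>
    rw [instantiate_cons_self, constPrefix_cons_of_le hx, constPrefix_cons_of_le le_rfl]

end constPrefix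

/-! ### The Graham–Rothschild theorem -/

section GrahamRothschild

universe u

theorem exists_isParamWord_one_forall_eq (a : ℕ) (κ : Type u) [Finite κ] :
    ∃ N, ∀ c : List ℕ → κ, ∃ u, IsParamWord a N 1 u ∧ ∃ j, ∀ x < a,
      c (instantiate a u [x]) = j := by
  obtain ⟨N, hN⟩ :=
    Combinatorics.Subspace.exists_mono_in_high_dimension_fin (Fin a) κ Unit
  refine ⟨N, fun c => ?_⟩
  obtain ⟨l, j, hj⟩ := hN fun v => c (List.ofFn fun i => (v i : ℕ))
  obtain ⟨i, hi⟩ := l.proper ()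
  let u := List.ofFn fun i => (l.idxFun i).elim Fin.val fun _ => a
  have hu : IsParamWord a u.length 1 u := by
    refine .of_mem_of_forall_le (List.mem_ofFn.2 ⟨i, by simp [hi]⟩) fun y hy => ?_
    obtain ⟨i, rfl⟩ := List.mem_ofFn.1 hy
    cases l.idxFun i with
    | inl x => exact x.isLt.le
    | inr _ => exact le_rfl
  refine ⟨u, by simpa [u] using hu, j, fun x hx => ?_⟩
  rw [← hj fun _ => ⟨x, hx⟩, instantiate, List.map_ofFn]
  congr 2
  funext i
  rw [Combinatorics.Subspace.apply_def, Function.comp_apply]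
  cases l.idxFun i with
  | inl y => exact getD_range_append_of_lt y.isLt
  | inr _ => exact getD_range_append_add (x := 0)

theorem finite_setOf_length_le_and_forall_lt (a L : ℕ) :
    {τ : List ℕ | τ.length ≤ L ∧ ∀ y ∈ τ, y < a}.Finite := by
  refine ((List.finite_length_le (Fin a) L).image (List.map Fin.val)).subset ?_
  rintro τ ⟨hL, hτ⟩
  lift τ to List (Fin a) using hτ
  exact ⟨τ, by simpa using hL, rfl⟩

/- `γ` is a concatenation of Hales–Jewett lines, one per parameter, each monochromatic for all
continuations at once. So changing a constant letter of `σ` does not change the colour. -/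
theorem exists_isParamWord_forall_eq_length_constPrefix (a M : ℕ) (κ : Type u) [Finite κ] :
    ∃ n, ∀ c : List ℕ → κ, ∃ γ, IsParamWord a n M γ ∧ ∃ f : ℕ → κ, ∀ σ, σ.length = M →
      c (constPrefix a (instantiate a γ σ)) = f (constPrefix a σ).length := by
  induction M with
  | zero => exact ⟨0, fun c => ⟨[], .nil a, fun _ => c [], fun σ _ => rfl⟩⟩
  | succ M ih =>
    obtain ⟨n, hn⟩ := ih
    let T := {τ : List ℕ | τ.length ≤ n ∧ ∀ y ∈ τ, y < a}
    have : Finite T := finite_setOf_length_le_and_forall_lt a n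
    obtain ⟨N, hN⟩ := exists_isParamWord_one_forall_eq a (T → κ)
    refine ⟨N + n, fun c => ?_⟩
    obtain ⟨u, hu, j, hj⟩ := hN fun w τ => c (w ++ τ)
    obtain ⟨γ, hγ, f, hf⟩ := hn fun τ => c (instantiate a u [0] ++ τ)
    have huγ : IsParamWord a (N + n) (M + 1) (u ++ skipLetter a γ) := by
      rw [Nat.add_comm M]
      exact hu.append hγ.skip
    refine ⟨u ++ skipLetter a γ, huγ,
      fun | 0 => c (constPrefix a (u ++ skipLetter a γ)) | i + 1 => f i, fun σ hσ => ?_⟩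
    obtain ⟨x, σ, rfl⟩ := List.exists_cons_of_length_eq_add_one hσ
    obtain hx | hx := lt_or_ge x a
    · set τ := constPrefix a (instantiate a γ σ) with hτdef
      have hτ : τ ∈ T :=
        ⟨length_constPrefix_le.trans_eq (length_instantiate.trans hγ.length_eq),
          fun _ => lt_of_mem_constPrefix⟩
      have hmono (x) (hx : x < a) : c (instantiate a u [x] ++ τ) = j ⟨τ, hτ⟩ :=
        congr_fun (hj x hx) ⟨τ, hτ⟩
      rw [instantiate_append, hu.instantiate_cons_eq_singleton, instantiate_skipLetter_cons,
        constPrefix_append fun _ => hu.lt_of_mem_instantiate_singleton hx, ← hτdef, hmono x hx,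
        ← hmono 0 (x.zero_le.trans_lt hx), hf σ (Nat.succ_injective hσ),
        constPrefix_cons_of_lt hx]
      rfl
    · rw [constPrefix_instantiate_cons huγ hx, constPrefix_cons_of_le hx]
      rfl

variable {a k : ℕ}

/-- The Graham–Rothschild property for `k`-parameter words over `a` constants: for every finite
colouring of words, some `m`-parameter word has all its `k`-parameter instantiations of one
colour. Colourings are defined on all lists, so that no subtypes of words are needed. -/
def GrahamRothschild (a k : ℕ) : Prop :=
  ∀ (m : ℕ) (κ : Type u) [Finite κ], ∃ n, ∀ C : List ℕ → κ, ∃ γ, IsParamWord a n m γ ∧ ∃ j,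
    ∀ σ, IsParamWord a m k σ → C (instantiate a γ σ) = j

theorem grahamRothschild_zero (a : ℕ) : GrahamRothschild.{u} a 0 := by
  intro m κ _
  obtain ⟨n, hn⟩ := exists_isParamWord_forall_eq_length_constPrefix a m κ
  refine ⟨n, fun C => ?_⟩
  obtain ⟨γ, hγ, f, hf⟩ := hn C
  refine ⟨γ, hγ, f m, fun σ hσ => ?_⟩
  have h := hf σ hσ.length_eq
  rwa [constPrefix_of_forall_lt (a := a) fun _ => (hγ.comp hσ).lt_of_mem,
    constPrefix_of_forall_lt (a := a) fun _ => hσ.lt_of_mem, hσ.length_eq] at h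

theorem GrahamRothschild.exists_isParamWord_forall_eq_constPrefix
    (h : GrahamRothschild.{u} (a + 1) k) (m : ℕ) (κ : Type u) [Finite κ] :
    ∃ n, ∀ C : List ℕ → κ, ∃ γ, IsParamWord a n m γ ∧ ∃ c : List ℕ → κ,
      ∀ σ, IsParamWord a m (k + 1) σ →
        C (instantiate a γ σ) = c (constPrefix a σ) := by
  induction m generalizing κ with
  | zero => exact ⟨0, fun C => ⟨[], .nil a, fun _ => C [], fun σ hσ => by cases hσ⟩⟩
  | succ m ih =>
    obtain ⟨b, hb⟩ := ih (Fin a → κ)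
    obtain ⟨n, hn⟩ := h b κ
    refine ⟨n + 1, fun C => ?_⟩
    obtain ⟨δ, hδ, j, hj⟩ := hn fun w => C (a :: w)
    obtain ⟨γ, hγ, c, hc⟩ :=
      hb fun w x => C (x :: instantiate a δ (x :: w))
    refine ⟨a :: instantiate (a + 1) δ (skipLetter a γ), (hδ.comp hγ.skip).cons_new,
      fun | [] => j | x :: τ => if hx : x < a then c τ ⟨x, hx⟩ else j, fun σ hσ => ?_⟩
    cases hσ with
    | @cons_old _ _ _ x σ hx hσ =>
      rw [instantiate_cons_self, instantiate_instantiate_skipLetter hδ hγ.length_eq,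
        constPrefix_cons_of_lt hx]
      simpa only [dif_pos hx] using congrFun (hc σ hσ) ⟨x, hx⟩
    | @cons_new _ _ _ σ hσ =>
      have hv : IsParamWord (a + 1) b k (instantiate a γ σ) := by
        rw [← instantiate_skipLetter_cons (x := a), ← instantiate_succ]
        exact hγ.skip.comp hσ
      rw [instantiate_cons_self, instantiate_instantiate_skipLetter hδ hγ.length_eq,
        constPrefix_cons_of_le le_rfl, ← instantiate_succ]
      exact hj _ hv

theorem exists_isParamWord_count_forall_constPrefix (ha : 0 < a) (P : ℕ → Prop)
    [DecidablePred P] (M : ℕ) :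
    ∃ γ, IsParamWord a M (Nat.count P M) γ ∧ ∀ σ, σ.length = Nat.count P M →
      (∃ y ∈ σ, a ≤ y) → P (constPrefix a (instantiate a γ σ)).length := by
  induction M generalizing P with
  | zero => exact ⟨[], .nil a, by simp⟩
  | succ M ih =>
    obtain ⟨γ, hγ, hP⟩ := ih fun i => P (i + 1)
    by_cases h0 : P 0
    · have hγ' : IsParamWord a (M + 1) (Nat.count P (M + 1)) (a :: skipLetter a γ) := by
        rw [Nat.count_succ', if_pos h0]
        exact hγ.skip.cons_new
      refine ⟨a :: skipLetter a γ, hγ', fun σ hσ hy => ?_⟩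
      rw [Nat.count_succ', if_pos h0] at hσ
      obtain ⟨x, σ, rfl⟩ := List.exists_cons_of_length_eq_add_one hσ
      obtain hx | hx := lt_or_ge x a
      · rw [instantiate_cons_skipLetter_cons, constPrefix_cons_of_lt hx]
        exact hP σ (Nat.succ_injective hσ) (by simpa [hx.not_ge] using hy)
      · rwa [constPrefix_instantiate_cons hγ' hx, constPrefix_cons_of_le le_rfl]
    · rw [Nat.count_succ', if_neg h0]
      refine ⟨0 :: γ, hγ.cons_old ha, fun σ hσ hy => ?_⟩
      rw [instantiate_cons_of_lt ha, constPrefix_cons_of_lt ha]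
      exact hP σ hσ hy

theorem exists_subset_range_card_eq_forall_eq {κ : Type u} [Finite κ] [Nonempty κ] (m : ℕ)
    (f : ℕ → κ) :
    ∃ j, ∃ s ⊆ Finset.range (Nat.card κ * m), s.card = m ∧ ∀ i ∈ s, f i = j := by
  classical
  cases nonempty_fintype κ
  obtain ⟨j, -, hj⟩ := Finset.exists_le_card_fiber_of_mul_le_card_of_maps_to
    (s := Finset.range (Nat.card κ * m)) (t := Finset.univ) (f := f) (n := m)
    (fun _ _ => Finset.mem_univ _) Finset.univ_nonempty (by simp)
  obtain ⟨s, hs, hcard⟩ := Finset.exists_subset_card_eq hj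
  exact ⟨j, s, hs.trans (Finset.filter_subset _ _), hcard,
    fun i hi => (Finset.mem_filter.1 (hs hi)).2⟩

/- The colour of `γ₁[σ]` depends only on the constant part of `σ`, after `γ₂` only on the length of
that part, and `γ₃` has its parameters exactly at a set of positions where this length gives one
fixed colour. -/
theorem GrahamRothschild.succ (ha : 0 < a) (h : GrahamRothschild.{u} (a + 1) k) :
    GrahamRothschild.{u} a (k + 1) := by
  intro m κ _
  obtain ⟨L, hL⟩ := exists_isParamWord_forall_eq_length_constPrefix a (Nat.card κ * m) κ
  obtain ⟨n, hn⟩ := h.exists_isParamWord_forall_eq_constPrefix L κ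
  refine ⟨n, fun C => ?_⟩
  have : Nonempty κ := ⟨C []⟩
  obtain ⟨γ₁, hγ₁, c, hc⟩ := hn C
  obtain ⟨γ₂, hγ₂, f, hf⟩ := hL c
  obtain ⟨j, s, hs, hcard, hj⟩ := exists_subset_range_card_eq_forall_eq m f
  have hcount : Nat.count (· ∈ s) (Nat.card κ * m) = m := by
    rw [Nat.count_eq_card_filter_range, Finset.filter_mem_eq_inter,
      Finset.inter_eq_right.2 hs, hcard]
  obtain ⟨γ₃, hγ₃, hmem⟩ := exists_isParamWord_count_forall_constPrefix ha (· ∈ s) (Nat.card κ * m)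
  rw [hcount] at hγ₃ hmem
  refine ⟨_, hγ₁.comp (hγ₂.comp hγ₃), j, fun σ hσ => ?_⟩
  have hσ₃ := hγ₃.comp hσ
  rw [hγ₁.instantiate_assoc (hγ₂.comp hγ₃).length_eq, hγ₂.instantiate_assoc hγ₃.length_eq,
    hc _ (hγ₂.comp hσ₃), hf _ hσ₃.length_eq]
  exact hj _ (hmem σ hσ.length_eq ⟨a, hσ.mem le_rfl (by omega), le_rfl⟩)

theorem graham_rothschild (ha : 0 < a) (k : ℕ) : GrahamRothschild.{u} a k := by
  induction k generalizing a with
  | zero => exact grahamRothschild_zero a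
  | succ k ih => exact (ih a.succ_pos).succ ha

end GrahamRothschild

section Greedy

variable {β : Type*} {R : ℕ → β → Prop}

theorem exists_isParamWord_one_forall₂ {a : ℕ} {qs : List β} (hold : ∀ q ∈ qs, ∃ y < a, R y q)
    (hnew : ∃ q ∈ qs, R a q) : ∃ w, IsParamWord a qs.length 1 w ∧ List.Forall₂ R w qs := by
  classical
  obtain ⟨q₀, hq₀, hR⟩ := hnew
  choose! y hy hyR using hold
  refine ⟨qs.map (Function.update y q₀ a), ?_, ?_⟩
  · rw [← List.length_map (Function.update y q₀ a)]
    refine .of_mem_of_forall_le (List.mem_map.2 ⟨q₀, hq₀, by simp⟩) ?_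
    rw [List.forall_mem_map]
    intro q hq
    by_cases h : q = q₀
    · simp [h]
    · simpa [h] using (hy q hq).le
  · rw [List.forall₂_map_left_iff, List.forall₂_same]
    intro q hq
    by_cases h : q = q₀
    · simpa [h] using hR
    · simpa [h] using hyR q hq

theorem exists_isParamWord_forall₂ {blocks : ℕ → List β} {a k : ℕ}
    (hold : ∀ j, a ≤ j → j < a + k → ∀ q ∈ blocks j, ∃ y < j, R y q)
    (hnew : ∀ j, a ≤ j → j < a + k → ∃ q ∈ blocks j, R j q) :
    ∃ w, IsParamWord a ((List.range' a k).flatMap blocks).length k w ∧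
      List.Forall₂ R w ((List.range' a k).flatMap blocks) := by
  induction k generalizing a with
  | zero => exact ⟨[], .nil a, .nil⟩
  | succ k ih =>
    obtain ⟨u, hu, huR⟩ := exists_isParamWord_one_forall₂ (hold a le_rfl (by omega))
      (hnew a le_rfl (by omega))
    obtain ⟨w, hw, hwR⟩ := ih (a := a + 1) (fun j h₁ h₂ => hold j (by omega) (by omega))
      fun j h₁ h₂ => hnew j (by omega) (by omega)
    rw [List.range'_succ, List.flatMap_cons, List.length_append, Nat.add_comm k]
    exact ⟨u ++ w, hu.append hw, List.rel_append huR hwR⟩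

end Greedy

/-! ### Quotients of `ℓ₁` spaces -/

section UnitBallQuotient

variable {𝕜 E F ι : Type*} [RCLike 𝕜] [NormedAddCommGroup E] [NormedSpace 𝕜 E]
  [NormedAddCommGroup F] [NormedSpace 𝕜 F] [Fintype ι]

/-- Contractive quotient mappings between arbitrary normed spaces: maps of the closed unit ball onto
the closed unit ball. For `ℓ₁ⁿ(ℂ)` this is `IsContractiveQuotient`. -/
def IsUnitBallQuotient (φ : E →L[𝕜] F) : Prop :=
  φ '' Metric.closedBall 0 1 = Metric.closedBall 0 1

theorem IsUnitBallQuotient.id : IsUnitBallQuotient (ContinuousLinearMap.id 𝕜 E) :=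
  Set.image_id _

namespace IsUnitBallQuotient

variable {φ : E →L[𝕜] F}

theorem norm_apply_le_one (hφ : IsUnitBallQuotient φ) {x : E} (hx : ‖x‖ ≤ 1) : ‖φ x‖ ≤ 1 := by
  simpa using hφ.subset (Set.mem_image_of_mem φ (mem_closedBall_zero_iff.2 hx))

theorem exists_preimage (hφ : IsUnitBallQuotient φ) {y : F} (hy : ‖y‖ ≤ 1) :
    ∃ x, ‖x‖ ≤ 1 ∧ φ x = y := by
  simpa using hφ.superset (mem_closedBall_zero_iff.2 hy)

theorem norm_apply_le (hφ : IsUnitBallQuotient φ) (x : E) : ‖φ x‖ ≤ ‖x‖ := by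
  obtain rfl | hx := eq_or_ne x 0
  · simp
  · have h := hφ.norm_apply_le_one (norm_smul_inv_norm (𝕜 := 𝕜) hx).le
    rwa [map_smul, norm_smul, norm_inv, RCLike.norm_ofReal, abs_norm,
      inv_mul_le_one₀ (norm_pos_iff.2 hx)] at h

end IsUnitBallQuotient

theorem norm_basisFun_one (i : ι) : ‖PiLp.basisFun 1 𝕜 ι i‖ = 1 := by
  classical
  simp [PiLp.basisFun_apply]

theorem opNorm_le_of_basisFun {T : PiLp 1 (fun _ : ι => 𝕜) →L[𝕜] E} {C : ℝ} (hC : 0 ≤ C)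
    (h : ∀ i, ‖T (PiLp.basisFun 1 𝕜 ι i)‖ ≤ C) : ‖T‖ ≤ C := by
  refine T.opNorm_le_bound hC fun x => ?_
  calc ‖T x‖ = ‖∑ i, x i • T (PiLp.basisFun 1 𝕜 ι i)‖ := by
        conv_lhs => rw [← (PiLp.basisFun 1 𝕜 ι).sum_repr x]
        simp [map_sum]
    _ ≤ ∑ i, ‖x i‖ * C := norm_sum_le_of_le _ fun i _ => by
        rw [norm_smul]
        exact mul_le_mul_of_nonneg_left (h i) (norm_nonneg _)
    _ = C * ‖x‖ := by rw [← Finset.sum_mul, PiLp.norm_eq_of_L1, mul_comm]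

theorem IsUnitBallQuotient.of_basisFun {ι' : Type*} [Fintype ι']
    {φ : PiLp 1 (fun _ : ι => 𝕜) →L[𝕜] E} (hφ : IsUnitBallQuotient φ)
    {T : PiLp 1 (fun _ : ι' => 𝕜) →L[𝕜] E} (hnorm : ∀ t, ‖T (PiLp.basisFun 1 𝕜 ι' t)‖ ≤ 1)
    (hhit : ∀ i, ∃ t, T (PiLp.basisFun 1 𝕜 ι' t) = φ (PiLp.basisFun 1 𝕜 ι i)) :
    IsUnitBallQuotient T := by
  choose t ht using hhit
  let S : PiLp 1 (fun _ : ι => 𝕜) →L[𝕜] PiLp 1 (fun _ : ι' => 𝕜) :=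
    (PiLp.basisFun 1 𝕜 ι).constrL fun i => PiLp.basisFun 1 𝕜 ι' (t i)
  have hS : ‖S‖ ≤ 1 := opNorm_le_of_basisFun zero_le_one fun i => by
    rw [Module.Basis.constrL_basis, norm_basisFun_one]
  have hTS : ∀ x, T (S x) = φ x := fun x => by
    refine LinearMap.congr_fun (f := (T.comp S : _ →ₗ[𝕜] E)) (g := φ)
      ((PiLp.basisFun 1 𝕜 ι).ext fun i => ?_) x
    change T (S (PiLp.basisFun 1 𝕜 ι i)) = φ (PiLp.basisFun 1 𝕜 ι i)
    rw [Module.Basis.constrL_basis, ht]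
  refine Set.Subset.antisymm ?_ fun y hy => ?_
  · rintro _ ⟨x, hx, rfl⟩
    rw [mem_closedBall_zero_iff] at hx ⊢
    exact (T.le_of_opNorm_le_of_le (opNorm_le_of_basisFun zero_le_one hnorm) hx).trans_eq
      (one_mul 1)
  · obtain ⟨x, hx, rfl⟩ := hφ.exists_preimage (mem_closedBall_zero_iff.1 hy)
    refine ⟨S x, mem_closedBall_zero_iff.2 ?_, hTS x⟩
    exact (S.le_of_opNorm_le_of_le hS hx).trans_eq (one_mul 1)

/-- `f` enumerates a finite `δ`-net of the unit ball of `E` consisting of points of that ball and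
containing the images under `φ` of the coordinate vectors, from which `f` recovers the unit ball
exactly. -/
structure IsUnitBallNet {b : ℕ} (φ : PiLp 1 (fun _ : ι => 𝕜) →L[𝕜] E) (δ : ℝ) (f : Fin b → E) :
    Prop where
  norm_le_one : ∀ l, ‖f l‖ ≤ 1
  exists_near : ∀ x, ‖x‖ ≤ 1 → ∃ l, ‖x - f l‖ ≤ δ
  exists_eq : ∀ i, ∃ l, f l = φ (PiLp.basisFun 1 𝕜 ι i)

theorem IsUnitBallQuotient.exists_isUnitBallNet {φ : PiLp 1 (fun _ : ι => 𝕜) →L[𝕜] E}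
    (hφ : IsUnitBallQuotient φ) {δ : ℝ} (hδ : 0 < δ) :
    ∃ (b : ℕ) (f : Fin b → E), IsUnitBallNet φ δ f := by
  have hcompact : IsCompact (Metric.closedBall (0 : E) 1) := by
    rw [← hφ]
    exact (isCompact_closedBall 0 1).image φ.continuous
  obtain ⟨s, hs, hfin, hcover⟩ := hcompact.finite_cover_balls hδ
  obtain ⟨b, f, -, hf⟩ := (hfin.union (Set.finite_range (φ ∘ PiLp.basisFun 1 𝕜 ι))).fin_param
  refine ⟨b, f, fun l => ?_, fun x hx => ?_, fun i => ?_⟩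
  · obtain hl | ⟨i, hi⟩ := hf.subset (Set.mem_range_self l)
    · exact mem_closedBall_zero_iff.1 (hs hl)
    · rw [← hi]
      exact hφ.norm_apply_le_one (norm_basisFun_one i).le
  · obtain ⟨y, hy, hxy⟩ := Set.mem_iUnion₂.1 (hcover (mem_closedBall_zero_iff.2 hx))
    obtain ⟨l, rfl⟩ := hf.superset (Or.inl hy)
    exact ⟨l, (mem_ball_iff_norm.1 hxy).le⟩
  · exact hf.superset (Or.inr ⟨i, rfl⟩)

end UnitBallQuotient

/-! ### Scaled nets -/

section ScaledNet

variable {𝕜 E : Type*} [RCLike 𝕜] [NormedAddCommGroup E] [NormedSpace 𝕜 E]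
  {b N : ℕ} [NeZero b] {f : Fin b → E} {ε : ℝ}

variable (𝕜) in
/-- The `j`-th point of the net `{(s / N) • f l | s ≤ N, l < b}`, ordered by level: `j = b * s + l`
stands for `(s / N) • f l`. In particular the letters `j < b` all stand for `0`. -/
def scaledNet (N : ℕ) (f : Fin b → E) (j : ℕ) : E :=
  (((j / b : ℕ) : 𝕜) / N) • f (Fin.ofNat b j)

theorem scaledNet_of_lt {j : ℕ} (hj : j < b) : scaledNet 𝕜 N f j = 0 := by
  simp [scaledNet, Nat.div_eq_of_lt hj]

theorem scaledNet_mul_add (s : ℕ) (l : Fin b) :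
    scaledNet 𝕜 N f (b * s + l) = ((s : 𝕜) / N) • f l := by
  have hs : (b * s + l) / b = s := by
    rw [Nat.mul_add_div (NeZero.pos b), Nat.div_eq_of_lt l.isLt, Nat.add_zero]
  have hl : Fin.ofNat b (b * s + l) = l := Fin.ext <| by
    simp [Nat.mod_eq_of_lt l.isLt]
  rw [scaledNet, hs, hl]

theorem div_le_of_lt_add_mul {j : ℕ} (hj : j < b + b * N) : j / b ≤ N := by
  rw [← Nat.lt_succ_iff, Nat.div_lt_iff_lt_mul (NeZero.pos b), Nat.succ_mul]
  linarith

theorem norm_natCast_div_le_one {s : ℕ} (hs : s ≤ N) : ‖(s : 𝕜) / N‖ ≤ 1 := by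
  rw [norm_div, RCLike.norm_natCast, RCLike.norm_natCast]
  exact div_le_one_of_le₀ (Nat.cast_le.2 hs) N.cast_nonneg

theorem norm_scaledNet_le_one (hf : ∀ l, ‖f l‖ ≤ 1) {j : ℕ} (hj : j < b + b * N) :
    ‖scaledNet 𝕜 N f j‖ ≤ 1 := by
  rw [scaledNet, norm_smul]
  exact mul_le_one₀ (norm_natCast_div_le_one (div_le_of_lt_add_mul hj)) (norm_nonneg _) (hf _)

theorem exists_lt_norm_smul_sub_scaledNet_le (hf : ∀ l, ‖f l‖ ≤ 1)
    (hnear : ∀ x : E, ‖x‖ ≤ 1 → ∃ l, ‖x - f l‖ ≤ ε / 2) (hN : (N : ℝ)⁻¹ ≤ ε / 2) {j : ℕ}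
    (hbj : b ≤ j) (hj : j < b + b * N) {x : E} (hx : ‖x‖ ≤ 1) :
    ∃ y < j, ‖(((j / b : ℕ) : 𝕜) / N) • x - scaledNet 𝕜 N f y‖ ≤ ε := by
  obtain ⟨l, hl⟩ := hnear x hx
  obtain ⟨s, hs⟩ := Nat.exists_eq_add_of_le' (Nat.div_pos hbj (NeZero.pos b))
  have hsN : s + 1 ≤ N := hs ▸ div_le_of_lt_add_mul hj
  refine ⟨b * s + l, ?_, ?_⟩
  · calc b * s + l < b * (s + 1) := by rw [Nat.mul_succ]; exact Nat.add_lt_add_left l.isLt _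
      _ ≤ j := hs ▸ Nat.mul_div_le j b
  · have hsplit : ((s + 1 : ℕ) / N : 𝕜) • x - (s / N : 𝕜) • f l =
        ((s + 1 : ℕ) / N : 𝕜) • (x - f l) + (N : 𝕜)⁻¹ • f l := by
      rw [Nat.cast_add_one, add_div, one_div]
      module
    rw [hs, scaledNet_mul_add, hsplit]
    calc _ ≤ ‖((s + 1 : ℕ) / N : 𝕜)‖ * ‖x - f l‖ + ‖(N : 𝕜)⁻¹‖ * ‖f l‖ :=
          (norm_add_le _ _).trans_eq (by rw [norm_smul, norm_smul])
      _ ≤ 1 * (ε / 2) + ε / 2 * 1 := by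
          have hinv : ‖(N : 𝕜)⁻¹‖ ≤ ε / 2 := by rwa [norm_inv, RCLike.norm_natCast]
          exact add_le_add
            (mul_le_mul (norm_natCast_div_le_one hsN) hl (norm_nonneg _) zero_le_one)
            (mul_le_mul hinv (hf l) (norm_nonneg _) ((norm_nonneg _).trans hinv))
      _ = ε := by ring

end ScaledNet

section Main

variable {𝕜 E F ι ι' : Type*} [RCLike 𝕜] [NormedAddCommGroup E] [NormedSpace 𝕜 E]
  [NormedAddCommGroup F] [NormedSpace 𝕜 F] [Fintype ι] [Fintype ι']

variable (𝕜) in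
/-- The operator `ℓ₁ⁿ → E` whose `t`-th column is the point `e y` that the `t`-th letter `y` of `w`
stands for. -/
noncomputable def wordMap (n : ℕ) (e : ℕ → E) (w : List ℕ) : PiLp 1 (fun _ : Fin n => 𝕜) →L[𝕜] E :=
  (PiLp.basisFun 1 𝕜 (Fin n)).constrL fun t => e (w.getD t 0)

theorem wordMap_basisFun {n : ℕ} {e : ℕ → E} {w : List ℕ} (t : Fin n) :
    wordMap 𝕜 n e w (PiLp.basisFun 1 𝕜 (Fin n) t) = e (w.getD t 0) :=
  Module.Basis.constrL_basis _ _ _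

theorem IsParamWord.isUnitBallQuotient_wordMap {a n k : ℕ} {w : List ℕ} (hw : IsParamWord a n k w)
    {φ : PiLp 1 (fun _ : ι => 𝕜) →L[𝕜] E} (hφ : IsUnitBallQuotient φ) {e : ℕ → E}
    (hnorm : ∀ y < a + k, ‖e y‖ ≤ 1)
    (hhit : ∀ i, ∃ y, a ≤ y ∧ y < a + k ∧ e y = φ (PiLp.basisFun 1 𝕜 ι i)) :
    IsUnitBallQuotient (wordMap 𝕜 n e w) := by
  refine hφ.of_basisFun (fun t => ?_) fun i => ?_
  · have ht : (t : ℕ) < w.length := by simp [hw.length_eq]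
    rw [wordMap_basisFun, List.getD_eq_getElem _ _ ht]
    exact hnorm _ (hw.lt_of_mem (List.getElem_mem ht))
  · obtain ⟨y, hay, hy, hφy⟩ := hhit i
    obtain ⟨t, ht, rfl⟩ := List.getElem_of_mem (hw.mem hay hy)
    refine ⟨⟨t, hw.length_eq ▸ ht⟩, ?_⟩
    rw [wordMap_basisFun, List.getD_eq_getElem _ _ ht, hφy]

variable (𝕜) in
/-- The points of `F` whose images under a quotient map have to be approximated. There is one block
for each parameter `j` of a word for `scaledNet`: the net `g` scaled to the level `j / b` of `j`. -/
def scaledBlocks (b N : ℕ) {b' : ℕ} (g : Fin b' → F) : List F :=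
  (List.range' b (b * N)).flatMap fun j => List.ofFn fun l => (((j / b : ℕ) : 𝕜) / N) • g l

theorem mem_scaledBlocks {b N b' : ℕ} {g : Fin b' → F} {q : F} :
    q ∈ scaledBlocks 𝕜 b N g ↔
      ∃ j, b ≤ j ∧ j < b + b * N ∧ ∃ l, (((j / b : ℕ) : 𝕜) / N) • g l = q := by
  simp [scaledBlocks, List.mem_ofFn, and_assoc]

theorem exists_isParamWord_approx {b N b' : ℕ} [NeZero b] {ε : ℝ} (hε : 0 ≤ ε)
    {φ : PiLp 1 (fun _ : ι => 𝕜) →L[𝕜] E} {f : Fin b → E} (hf : IsUnitBallNet φ (ε / 2) f)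
    {ψ : PiLp 1 (fun _ : ι' => 𝕜) →L[𝕜] F} {g : Fin b' → F} (hg : IsUnitBallNet ψ ε g)
    (hN : (N : ℝ)⁻¹ ≤ ε / 2) {ρ : F →L[𝕜] E} (hρ : IsUnitBallQuotient ρ) :
    ∃ σ, IsParamWord b (scaledBlocks 𝕜 b N g).length (b * N) σ ∧
      List.Forall₂ (fun y q => ‖ρ q - scaledNet 𝕜 N f y‖ ≤ ε) (List.range b ++ σ)
        (List.replicate b 0 ++ scaledBlocks 𝕜 b N g) := by
  have hold (j : ℕ) (hbj : b ≤ j) (hj : j < b + b * N) :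
      ∀ q ∈ List.ofFn fun l => (((j / b : ℕ) : 𝕜) / N) • g l,
        ∃ y < j, ‖ρ q - scaledNet 𝕜 N f y‖ ≤ ε := by
    rw [List.forall_mem_ofFn_iff]
    intro l
    rw [map_smul]
    exact exists_lt_norm_smul_sub_scaledNet_le hf.norm_le_one hf.exists_near hN hbj hj
      (hρ.norm_apply_le_one (hg.norm_le_one l))
  have hnew (j : ℕ) (_ : b ≤ j) (hj : j < b + b * N) :
      ∃ q ∈ List.ofFn fun l => (((j / b : ℕ) : 𝕜) / N) • g l,
        ‖ρ q - scaledNet 𝕜 N f j‖ ≤ ε := by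
    obtain ⟨x, hx, hxj⟩ := hρ.exists_preimage (hf.norm_le_one (Fin.ofNat b j))
    obtain ⟨l, hl⟩ := hg.exists_near x hx
    refine ⟨_, List.mem_ofFn.2 ⟨l, rfl⟩, ?_⟩
    calc ‖ρ ((((j / b : ℕ) : 𝕜) / N) • g l) - scaledNet 𝕜 N f j‖
        = ‖((j / b : ℕ) : 𝕜) / N‖ * ‖ρ (x - g l)‖ := by
          rw [map_smul, scaledNet, ← hxj, ← smul_sub, norm_smul, map_sub, norm_sub_rev]
      _ ≤ 1 * ε := mul_le_mul (norm_natCast_div_le_one (div_le_of_lt_add_mul hj))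
          ((hρ.norm_apply_le _).trans hl) (norm_nonneg _) zero_le_one
      _ = ε := one_mul ε
  have hzero : List.Forall₂ (fun y q => ‖ρ q - scaledNet 𝕜 N f y‖ ≤ ε) (List.range b)
      (List.replicate b 0) := by
    refine List.forall₂_iff_get.2 ⟨by simp, fun i hi _ => ?_⟩
    have hib : i < b := by simpa using hi
    simpa [scaledNet_of_lt hib] using hε
  obtain ⟨σ, hσ, hσR⟩ := exists_isParamWord_forall₂ hold hnew
  exact ⟨σ, hσ, List.rel_append hzero hσR⟩

theorem isUnitBallQuotient_wordMap_scaledNet {n b N : ℕ} [NeZero b] (hN : 0 < N) {δ : ℝ}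
    {φ : PiLp 1 (fun _ : ι => 𝕜) →L[𝕜] E} (hφ : IsUnitBallQuotient φ) {f : Fin b → E}
    (hf : IsUnitBallNet φ δ f) {w : List ℕ} (hw : IsParamWord b n (b * N) w) :
    IsUnitBallQuotient (wordMap 𝕜 n (scaledNet 𝕜 N f) w) := by
  refine hw.isUnitBallQuotient_wordMap hφ
    (fun y => norm_scaledNet_le_one hf.norm_le_one) fun i => ?_
  obtain ⟨l, hl⟩ := hf.exists_eq i
  have hbN : b ≤ b * N := Nat.le_mul_of_pos_right b hN
  refine ⟨b * N + l, by omega, by omega, ?_⟩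
  rw [scaledNet_mul_add, div_self (Nat.cast_ne_zero.2 hN.ne'), one_smul, hl]

theorem isUnitBallQuotient_wordMap_scaledBlocks {n b N b' : ℕ} [NeZero b] (hN : 0 < N) {δ : ℝ}
    {ψ : PiLp 1 (fun _ : ι => 𝕜) →L[𝕜] F} (hψ : IsUnitBallQuotient ψ) {g : Fin b' → F}
    (hg : IsUnitBallNet ψ δ g) {γ : List ℕ}
    (hγ : IsParamWord b n (scaledBlocks 𝕜 b N g).length γ) :
    IsUnitBallQuotient
      (wordMap 𝕜 n ((List.replicate b 0 ++ scaledBlocks 𝕜 b N g).getD · 0) γ) := by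
  refine hγ.isUnitBallQuotient_wordMap hψ (fun y hy => ?_) fun i => ?_
  · have hy' : y < (List.replicate b 0 ++ scaledBlocks 𝕜 b N g).length := by simpa using hy
    rw [List.getD_eq_getElem _ _ hy']
    obtain h | h := List.mem_append.1 (List.getElem_mem hy')
    · rw [List.eq_of_mem_replicate h, norm_zero]
      exact zero_le_one
    · obtain ⟨j, -, hj, l, hl⟩ := mem_scaledBlocks.1 h
      rw [← hl, norm_smul]
      exact mul_le_one₀ (norm_natCast_div_le_one (div_le_of_lt_add_mul hj)) (norm_nonneg _)
        (hg.norm_le_one l)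
  · obtain ⟨l, hl⟩ := hg.exists_eq i
    have hmem : ψ (PiLp.basisFun 1 𝕜 ι i) ∈ scaledBlocks 𝕜 b N g := by
      refine mem_scaledBlocks.2 ⟨b * N, Nat.le_mul_of_pos_right b hN, by simp [NeZero.pos b], l, ?_⟩
      rw [Nat.mul_div_cancel_left N (NeZero.pos b), div_self (Nat.cast_ne_zero.2 hN.ne'),
        one_smul, hl]
    obtain ⟨t, ht, hti⟩ := List.getElem_of_mem hmem
    refine ⟨b + t, by omega, by omega, ?_⟩
    rw [List.getD_append_right _ _ _ _ (by simp), List.length_replicate, Nat.add_sub_cancel_left,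
      List.getD_eq_getElem _ _ ht, hti]

theorem norm_comp_wordMap_sub_le {a n : ℕ} {ε : ℝ} (hε : 0 ≤ ε) {ρ : F →L[𝕜] E} {e : ℕ → E}
    {γ σ : List ℕ} {Q : List F}
    (hσ : List.Forall₂ (fun y q => ‖ρ q - e y‖ ≤ ε) (List.range a ++ σ) Q)
    (hγ : γ.length = n) (hγQ : ∀ y ∈ γ, y < Q.length) :
    ‖ρ.comp (wordMap 𝕜 n (Q.getD · 0) γ) - wordMap 𝕜 n e (instantiate a γ σ)‖ ≤ ε := by
  refine opNorm_le_of_basisFun hε fun t => ?_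
  have ht : (t : ℕ) < γ.length := hγ ▸ t.isLt
  have hQ : γ[t] < Q.length := hγQ _ (List.getElem_mem ht)
  have hσQ : γ[t] < (List.range a ++ σ).length := hσ.length_eq ▸ hQ
  have hγt : γ.getD t 0 = γ[t] := List.getD_eq_getElem _ _ ht
  have hσt : (instantiate a γ σ).getD t 0 = (List.range a ++ σ)[γ[t]] := by
    rw [List.getD_eq_getElem _ _ (length_instantiate.symm ▸ ht)]
    exact (List.getElem_map _).trans (List.getD_eq_getElem _ _ hσQ)
  rw [sub_apply, ContinuousLinearMap.comp_apply, wordMap_basisFun, wordMap_basisFun, hγt, hσt,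
    List.getD_eq_getElem _ _ hQ]
  exact (List.forall₂_iff_get.1 hσ).2 _ hσQ hQ

theorem arp_dual_l1_complex_general {d m : ℕ}
    {φ : PiLp 1 (fun _ : Fin d => 𝕜) →L[𝕜] E} (hφ : IsUnitBallQuotient φ)
    {ψ : PiLp 1 (fun _ : Fin m => 𝕜) →L[𝕜] F} (hψ : IsUnitBallQuotient ψ)
    (κ : Type*) [Finite κ] {ε : ℝ} (hε : 0 < ε) :
    ∃ n : ℕ, ∀ c : {ρ : PiLp 1 (fun _ : Fin n => 𝕜) →L[𝕜] E // IsUnitBallQuotient ρ} → κ,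
      ∃ (γ : PiLp 1 (fun _ : Fin n => 𝕜) →L[𝕜] F) (_ : IsUnitBallQuotient γ) (j : κ),
        ∀ ρ : F →L[𝕜] E, IsUnitBallQuotient ρ →
          ∃ (ρ' : PiLp 1 (fun _ : Fin n => 𝕜) →L[𝕜] E) (hρ' : IsUnitBallQuotient ρ'),
            c ⟨ρ', hρ'⟩ = j ∧ ‖ρ.comp γ - ρ'‖ ≤ ε := by
  classical
  obtain _ | ⟨⟨k₀⟩⟩ := isEmpty_or_nonempty κ
  · exact ⟨d, fun c => isEmptyElim (c ⟨φ, hφ⟩)⟩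
  obtain ⟨b, f, hf⟩ := hφ.exists_isUnitBallNet (half_pos hε)
  obtain ⟨b', g, hg⟩ := hψ.exists_isUnitBallNet hε
  obtain ⟨N, hN⟩ := exists_nat_one_div_lt (half_pos hε)
  have hN : ((N + 1 : ℕ) : ℝ)⁻¹ ≤ ε / 2 := by simpa using hN.le
  have : NeZero b := ⟨by rintro rfl; exact (hf.exists_near 0 (by simp)).elim fun l _ => l.elim0⟩
  obtain ⟨n, hn⟩ := graham_rothschild (NeZero.pos b) (b * (N + 1))
    (scaledBlocks 𝕜 b (N + 1) g).length κ
  refine ⟨n, fun c => ?_⟩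
  obtain ⟨γ, hγ, j, hj⟩ := hn fun w =>
    if h : IsUnitBallQuotient (wordMap 𝕜 n (scaledNet 𝕜 (N + 1) f) w) then c ⟨_, h⟩ else k₀
  refine ⟨_, isUnitBallQuotient_wordMap_scaledBlocks N.succ_pos hψ hg hγ, j, fun ρ hρ => ?_⟩
  obtain ⟨σ, hσ, hσρ⟩ := exists_isParamWord_approx hε.le hf hg hN hρ
  have hquot := isUnitBallQuotient_wordMap_scaledNet N.succ_pos hφ hf (hγ.comp hσ)
  refine ⟨_, hquot, by simpa only [dif_pos hquot] using hj σ hσ, ?_⟩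
  exact norm_comp_wordMap_sub_le hε.le hσρ hγ.length_eq fun y hy => by simpa using hγ.lt_of_mem hy

end Main

/-- Dual form of the approximate Ramsey property: the family `{ℓ₁ⁿ(ℂ)}ₙ` with contractive
quotient mappings. -/
theorem arp_dual_l1_complex (d m r : ℕ) (ε : ℝ) (hε : 0 < ε) :
    ∃ n : ℕ, ∀ c : {φ : L1C n →L[ℂ] L1C d // IsContractiveQuotient φ} → Fin r,
      ∃ (γ : L1C n →L[ℂ] L1C m) (_ : IsContractiveQuotient γ) (j : Fin r),
        ∀ ρ : L1C m →L[ℂ] L1C d, IsContractiveQuotient ρ →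
          ∃ (ρ' : L1C n →L[ℂ] L1C d) (hρ' : IsContractiveQuotient ρ'),
            c ⟨ρ', hρ'⟩ = j ∧ ‖ρ.comp γ - ρ'‖ ≤ ε :=
  arp_dual_l1_complex_general .id .id (Fin r) hε
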